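/- Let Γ be a countable directed graph, F a potential and β ∈ ℝ, and assume there is a vertex v₀ with 0 < Σ_{n=0}^∞ A(β)^n_{v₀,v} < ∞ for all v ∈ Γ_V. Let m be an extremal e^{βF}-conformal measure on P(Γ) with m(Z(v₀)) = 1. Then for m-almost all p ∈ P(Γ) and every vertex v ∈ Γ_V, the limit lim_{k→∞} K_β(v, s(p_k)) exists and equals m(Z(v)). -/

import Mathlib

/-!
Write `ψ(v) = m(Z(v))`, `G` for the Green function and `X_k = s(p_k)` for the vertices of a random
path. Conformality is a Markov property, `m(Z(v) ∩ σ⁻ⁿ B) = A(β)ⁿ_{v,w} m(B)` for `B ⊆ Z(w)`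
(`measure_iterate`); in particular `ψ` is harmonic. The convergence is proved by the Banach
principle: a maximal inequality, together with convergence for a dense family.

*Maximal inequality* (`maximal_inequality`). For `y ≥ 0` on `V` and `lam > 0`, the paths from `v₀`
for which `∑ y(u) G(u, X_k) ≥ lam G(v₀, X_k)` for some `k` have mass at most `lam⁻¹ ∑ y(u) ψ(u)`.
Indeed, for a finite set `D` of vertices, the paths from `v` that hit `D` last at `w` have mass
`G(v,w) m(E_w)`, where `E_w` is the set of paths from `w` that never return to `D`; this applies
because paths from `v₀` are almost surely wandering.

*Dense family* (`mem_closure_coboundary`). If `σ` is a finitely supported signed measure on `V`,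
then `(σ - σA) G = σ`, which vanishes eventually along a wandering path. By Hahn-Banach in
`ℓ¹(V)` weighted by `ψ`, the measure `δ_v - ψ(v) δ_{v₀}` is a limit of such `σ - σA`: an
annihilating functional is a bounded function `f` with `fψ` harmonic, and `f` is constant on the
support of `ψ`. The latter is where extremality enters (`bounded_harmonic_const`): by martingale
convergence, the shift-invariant function `h = limsup f(X_k)` satisfies `∫_{Z(v)} h dm = f(v) ψ(v)`,
and `h · m` is a conformal measure dominated by `m` when `0 < f ≤ 1`.

Combining the two, `|G(v, X_k) - ψ(v) G(v₀, X_k)| ≥ lam G(v₀, X_k)` happens infinitely often with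
probability zero from `v₀` (`measure_bad_eq_zero`), and hence from every vertex, as `v₀` reaches
all of them.
-/

open MeasureTheory Filter Topology
open scoped ENNReal NNReal

namespace GraphKMS

variable {V A : Type}

/-- The space `P(Γ)` of infinite paths of a directed graph with vertex set `V`,
arrow set `A`, source map `s` and range map `r`. -/
structure PathSpace (s r : A → V) : Type where
  seq : ℕ → A
  compat : ∀ i, r (seq i) = s (seq (i + 1))

/-- The Borel σ-algebra of `P(Γ)`, i.e. the trace on `P(Γ)` of the Borel σ-algebra of the
product `A^ℕ` with `A` discrete. -/
instance (s r : A → V) : MeasurableSpace (PathSpace s r) :=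
  MeasurableSpace.comap (fun p => p.seq) (@MeasurableSpace.pi ℕ (fun _ => A) (fun _ => ⊤))

/-- The shift map `σ`. -/
def shift (s r : A → V) (p : PathSpace s r) : PathSpace s r :=
  ⟨fun i => p.seq (i + 1), fun i => p.compat (i + 1)⟩

/-- The cylinder set `Z(v)` of a vertex. -/
def cylV (s r : A → V) (v : V) : Set (PathSpace s r) := {p | s (p.seq 0) = v}

/-- The cylinder set `Z(a)` of an arrow. -/
def cylA (s r : A → V) (a : A) : Set (PathSpace s r) := {p | p.seq 0 = a}

/-- A finite path: a source vertex together with a compatible list of arrows.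
The empty list corresponds to the path of length `0` given by the vertex `src`. -/
structure FinPath (s r : A → V) : Type where
  src : V
  arrows : List A
  head_src : ∀ h : arrows ≠ [], s (arrows.head h) = src
  chain : arrows.Chain' (fun a b => r a = s b)

/-- The range `r(μ)` of a finite path. -/
def finRng (s r : A → V) (μ : FinPath s r) : V :=
  match μ.arrows.getLast? with
  | none => μ.src
  | some a => r a

/-- The additive extension `F(μ)` of a potential to finite paths. -/
def finWt (s r : A → V) (F : A → ℝ) (μ : FinPath s r) : ℝ := (μ.arrows.map F).sum

/-- The cylinder set `Z(μ)` of a finite path. -/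
def finCyl (s r : A → V) (μ : FinPath s r) : Set (PathSpace s r) :=
  {p | s (p.seq 0) = μ.src ∧ ∀ i : Fin μ.arrows.length, p.seq i.1 = μ.arrows.get i}

/-- The set of vertices occurring in a finite path. -/
def finVerts (s r : A → V) (μ : FinPath s r) : Set V :=
  {μ.src} ∪ {v | ∃ a ∈ μ.arrows, s a = v ∨ r a = v}

/-- The entries of the matrix `A(β)`. -/
noncomputable def Amat (s r : A → V) (F : A → ℝ) (β : ℝ) (v w : V) : ℝ≥0∞ :=
  ∑' a : {a : A // s a = v ∧ r a = w}, ENNReal.ofReal (Real.exp (-(β * F a.1)))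

/-- Powers of a `[0,∞]`-valued matrix. -/
noncomputable def matPow (M : V → V → ℝ≥0∞) : ℕ → V → V → ℝ≥0∞
  | 0 => fun v w => ({v} : Set V).indicator (fun _ => (1 : ℝ≥0∞)) w
  | n + 1 => fun v w => ∑' u : V, M v u * matPow M n u w

/-- The entries of `A(β)ⁿ`. -/
noncomputable def Apow (s r : A → V) (F : A → ℝ) (β : ℝ) (n : ℕ) (v w : V) : ℝ≥0∞ :=
  matPow (Amat s r F β) n v w

/-- The Green function `Σₙ A(β)ⁿ_{v,w}`. -/
noncomputable def Green (s r : A → V) (F : A → ℝ) (β : ℝ) (v w : V) : ℝ≥0∞ :=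
  ∑' n : ℕ, Apow s r F β n v w

/-- The Martin kernel `K_β(v,w)` with base point `v₀`. -/
noncomputable def MartinK (s r : A → V) (F : A → ℝ) (β : ℝ) (v₀ v w : V) : ℝ≥0∞ :=
  Green s r F β v w / Green s r F β v₀ w

/-- A harmonic vector for a `[0,∞]`-valued matrix: a nonzero, finite-valued,
nonnegative vector fixed by the matrix. -/
def IsHarmonic (M : V → V → ℝ≥0∞) (ψ : V → ℝ≥0∞) : Prop :=
  ψ ≠ 0 ∧ (∀ v, ψ v ≠ ∞) ∧ ∀ v, (∑' w : V, M v w * ψ w) = ψ v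

/-- A minimal harmonic vector. -/
def IsMinimalHarmonic (M : V → V → ℝ≥0∞) (ψ : V → ℝ≥0∞) : Prop :=
  IsHarmonic M ψ ∧ ∀ φ : V → ℝ≥0∞, IsHarmonic M φ → (∀ v, φ v ≤ ψ v) →
    ∃ c : ℝ≥0, 0 < c ∧ ∀ v, φ v = (c : ℝ≥0∞) * ψ v

/-- An `e^{βF}`-conformal measure: a nonzero Borel measure which is finite on the
cylinders of vertices and satisfies `m(σ(B ∩ Z(a))) = e^{βF(a)} m(B ∩ Z(a))`. -/
def Conformal (s r : A → V) (F : A → ℝ) (β : ℝ) (m : Measure (PathSpace s r)) : Prop :=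
  m ≠ 0 ∧ (∀ v : V, m (cylV s r v) ≠ ∞) ∧
    ∀ (a : A) (B : Set (PathSpace s r)), MeasurableSet B →
      m (shift s r '' (B ∩ cylA s r a)) =
        ENNReal.ofReal (Real.exp (β * F a)) * m (B ∩ cylA s r a)

/-- An extremal conformal measure: every conformal measure dominated by it is a
positive scalar multiple of it. -/
def ExtremalConformal (s r : A → V) (F : A → ℝ) (β : ℝ) (m : Measure (PathSpace s r)) : Prop :=
  Conformal s r F β m ∧ ∀ m' : Measure (PathSpace s r), Conformal s r F β m' →
    (∀ B : Set (PathSpace s r), MeasurableSet B → m' B ≤ m B) →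
    ∃ c : ℝ≥0, 0 < c ∧ m' = (c : ℝ≥0∞) • m

/-- A wandering path: its vertices leave every finite set of vertices. -/
def Wandering (s r : A → V) (p : PathSpace s r) : Prop :=
  ∀ F₀ : Finset V, ∃ N : ℕ, ∀ i, N ≤ i → s (p.seq i) ∉ F₀

/-- A ray: an infinite path with pairwise distinct vertices. -/
def IsRay (s r : A → V) (p : PathSpace s r) : Prop :=
  Function.Injective fun i => s (p.seq i)

/-- The relation `p → q` between (wandering) paths. -/
def Leads (s r : A → V) (p q : PathSpace s r) : Prop :=
  ∀ (F₀ : Finset V) (N : ℕ), ∃ n₁ n₂ : ℕ, N ≤ n₁ ∧ N ≤ n₂ ∧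
    ∃ μ : FinPath s r, μ.src = s (p.seq n₁) ∧ finRng s r μ = s (q.seq n₂) ∧
      ∀ v ∈ finVerts s r μ, v ∉ F₀

/-- Nonempty path lists from `v` to `w`. -/
def IsPathList (s r : A → V) (l : List A) (v w : V) : Prop :=
  l ≠ [] ∧ l.Chain' (fun a b => r a = s b) ∧
    (∀ h : l ≠ [], s (l.head h) = v) ∧ ∀ h : l ≠ [], r (l.getLast h) = w

/-- The set `L_j(y)` (zero-indexed in `j`). -/
def Lset (s r : A → V) (p : PathSpace s r) (j : ℕ) : Set (List A) :=
  {l | IsPathList s r l (s (p.seq j)) (s (p.seq (j + 1))) ∧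
    ∀ a ∈ l, ∀ i ≤ j, r a ≠ s (p.seq i)}

/-- The sum `Σ_{μ ∈ L_j(y)} e^{-βF(μ)}`. -/
noncomputable def LSum (s r : A → V) (F : A → ℝ) (β : ℝ) (p : PathSpace s r) (j : ℕ) : ℝ≥0∞ :=
  ∑' l : Lset s r p j, ENNReal.ofReal (Real.exp (-(β * (l.1.map F).sum)))

/-- The product `𝕎(y[1,k+1[)` (zero-indexed: the product of the first `k` level sums). -/
noncomputable def Wprod (s r : A → V) (F : A → ℝ) (β : ℝ) (p : PathSpace s r) (k : ℕ) : ℝ≥0∞ :=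
  ∏ j ∈ Finset.range k, LSum s r F β p j

/-- `𝕍_β(v,y)`: the limit of the nondecreasing sequence of quotients. -/
noncomputable def Vbeta (s r : A → V) (F : A → ℝ) (β : ℝ) (v : V) (p : PathSpace s r) : ℝ≥0∞ :=
  Filter.limsup (fun k => Green s r F β v (s (p.seq k)) / Wprod s r F β p k) Filter.atTop

/-- `B_k(y)` (zero-indexed in `k`). -/
def Bset (s r : A → V) (p : PathSpace s r) (k : ℕ) : Set (PathSpace s r) :=
  {x | s (x.seq 0) = s (p.seq k) ∧ ∀ i, 1 ≤ i → ∀ j ≤ k, s (x.seq i) ≠ s (p.seq j)}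

/-- `𝔹_k(y)` (zero-indexed in `k`). -/
def BBset (s r : A → V) (p : PathSpace s r) (k : ℕ) : Set (PathSpace s r) :=
  Bset s r p k ∩ ⋂ (j : ℕ) (_ : k + 1 ≤ j), ⋃ i : ℕ, (shift s r)^[i] ⁻¹' Bset s r p j

/-- `𝔹(y)`. -/
def BB (s r : A → V) (p : PathSpace s r) : Set (PathSpace s r) :=
  ⋃ (n : ℕ) (k : ℕ), (shift s r)^[n] ⁻¹' ((shift s r)^[k] '' BBset s r p 0)

/-- A simple path from `v` to `w`: no arrow except possibly the last one has range `w`. -/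
def IsSimplePath (s r : A → V) (v w : V) (l : List A) : Prop :=
  IsPathList s r l v w ∧ ∀ a ∈ l.dropLast, r a ≠ w

/-- `R_{βF}(v,w)`: the sum of `e^{-βF(ν)}` over all simple paths `ν` from `v` to `w`. -/
noncomputable def Rsum (s r : A → V) (F : A → ℝ) (β : ℝ) (v w : V) : ℝ≥0∞ :=
  ∑' l : {l : List A // IsSimplePath s r v w l},
    ENNReal.ofReal (Real.exp (-(β * (l.1.map F).sum)))

open Classical in
/-- The restriction of a matrix to a subset of the index set (extended by `0`). -/
noncomputable def restrMat (M : V → V → ℝ≥0∞) (S : Set V) (v w : V) : ℝ≥0∞ :=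
  if v ∈ S ∧ w ∈ S then M v w else 0

/-- A loop: a nonempty path list whose range equals its source. -/
def IsLoop (s r : A → V) (l : List A) : Prop :=
  l ≠ [] ∧ l.Chain' (fun a b => r a = s b) ∧
    ∀ h : l ≠ [], r (l.getLast h) = s (l.head h)


/-! ### Measurability and the Markov property of conformal measures -/

section Basic

variable {s r : A → V}

lemma measurable_of_seq {X : Type} [MeasurableSpace X] (f : X → PathSpace s r)
    (h : ∀ i, @Measurable X A _ ⊤ (fun x => (f x).seq i)) : Measurable f := by
  let _ : MeasurableSpace A := ⊤
  rintro _ ⟨T, hT, rfl⟩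
  have : Measurable (fun x => (f x).seq) := measurable_pi_lambda _ h
  exact this hT

lemma measurable_seq (i : ℕ) :
    @Measurable (PathSpace s r) A _ ⊤ (fun p => p.seq i) := by
  let _ : MeasurableSpace A := ⊤
  exact (measurable_pi_apply i).comp (comap_measurable (fun p : PathSpace s r => p.seq))

lemma measurableSet_seq (i : ℕ) (T : Set A) :
    MeasurableSet {p : PathSpace s r | p.seq i ∈ T} :=
  measurable_seq i (MeasurableSpace.measurableSet_top (s := T))

lemma measurableSet_vert (i : ℕ) (T : Set V) :
    MeasurableSet {p : PathSpace s r | s (p.seq i) ∈ T} :=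
  measurableSet_seq i (s ⁻¹' T)

lemma measurableSet_cylV (v : V) : MeasurableSet (cylV s r v) :=
  measurableSet_vert 0 {v}

lemma measurableSet_cylA (a : A) : MeasurableSet (cylA s r a) :=
  measurableSet_seq 0 {a}

lemma measurable_shift : Measurable (shift s r) :=
  measurable_of_seq _ fun i => measurable_seq (i + 1)

lemma shift_iterate_seq (n : ℕ) (p : PathSpace s r) (k : ℕ) :
    ((shift s r)^[n] p).seq k = p.seq (k + n) := by
  induction n generalizing p with
  | zero => rfl
  | succ n ih =>
    rw [Function.iterate_succ_apply, ih]
    exact congrArg p.seq (by ring)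

variable {F : A → ℝ} {β : ℝ} {m : Measure (PathSpace s r)}

/-- The conformality condition read backwards along one arrow. -/
lemma measure_cylA_inter (hm : Conformal s r F β m) (a : A) {C : Set (PathSpace s r)}
    (hC : MeasurableSet C) :
    m (cylA s r a ∩ shift s r ⁻¹' C) =
      ENNReal.ofReal (Real.exp (-(β * F a))) * m (cylV s r (r a) ∩ C) := by
  have h := hm.2.2 a (shift s r ⁻¹' C) (measurable_shift hC)
  have himg : shift s r '' (shift s r ⁻¹' C ∩ cylA s r a) = cylV s r (r a) ∩ C := by
    ext q
    constructor
    · rintro ⟨p, ⟨hp, hpa⟩, rfl⟩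
      refine ⟨?_, hp⟩
      change s (p.seq 1) = r a
      rw [← hpa]
      exact (p.compat 0).symm
    · rintro ⟨hq, hqC⟩
      let p : PathSpace s r :=
        ⟨fun i => Nat.casesOn i a q.seq, fun i => by
          cases i with
          | zero => exact Eq.symm hq
          | succ i => exact q.compat i⟩
      have hp : shift s r p = q := rfl
      exact ⟨p, ⟨by simpa [Set.mem_preimage, hp] using hqC, rfl⟩, hp⟩
  rw [himg] at h
  rw [h, ← mul_assoc, ← ENNReal.ofReal_mul (Real.exp_nonneg _), ← Real.exp_add, Set.inter_comm]
  simp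

lemma tsum_Amat_mul (s r : A → V) (F : A → ℝ) (β : ℝ) (v : V) (g : V → ℝ≥0∞) :
    ∑' u, Amat s r F β v u * g u =
      ∑' a : {a : A // s a = v}, ENNReal.ofReal (Real.exp (-(β * F a.1))) * g (r a.1) := by
  classical
  have h1 : ∀ u, Amat s r F β v u * g u = ∑' a : A, if s a = v ∧ r a = u then
      ENNReal.ofReal (Real.exp (-(β * F a))) * g u else 0 := by
    intro u
    rw [Amat, ← ENNReal.tsum_mul_right]
    refine (tsum_subtype {a : A | s a = v ∧ r a = u}
      (fun a => ENNReal.ofReal (Real.exp (-(β * F a))) * g u)).trans ?_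
    simp [Set.indicator_apply]
  simp_rw [h1]
  rw [ENNReal.tsum_comm]
  refine Eq.trans ?_ (tsum_subtype {a : A | s a = v}
    (fun a => ENNReal.ofReal (Real.exp (-(β * F a))) * g (r a))).symm
  refine tsum_congr fun a => ?_
  rw [tsum_eq_single (r a)]
  · simp [Set.indicator_apply]
  · intro u hu
    simp [hu.symm]

variable [Countable A]

lemma measure_cylV_inter (m : Measure (PathSpace s r)) (v : V) {S : Set (PathSpace s r)}
    (hS : MeasurableSet S) :
    m (cylV s r v ∩ S) = ∑' a : {a : A // s a = v}, m (cylA s r a.1 ∩ S) := by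
  rw [← measure_iUnion]
  · congr 1
    ext p
    simp [cylV, cylA]
  · intro a b hab
    refine Set.disjoint_left.2 fun p hp hq => hab (Subtype.ext ?_)
    exact hp.1.symm.trans hq.1
  · exact fun a => (measurableSet_cylA _).inter hS

/-- One step of the path under a conformal measure. -/
lemma measure_step (hm : Conformal s r F β m) (v : V) {C : Set (PathSpace s r)}
    (hC : MeasurableSet C) :
    m (cylV s r v ∩ shift s r ⁻¹' C) =
      ∑' u, Amat s r F β v u * m (cylV s r u ∩ C) := by
  rw [measure_cylV_inter m v (measurable_shift hC), tsum_Amat_mul]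
  exact tsum_congr fun a => measure_cylA_inter hm a.1 hC

/-- The Markov property: the mass of the paths from `v` whose `n`-th tail lies in `B ⊆ Z(w)`
is `A(β)ⁿ_{v,w} m(B)`. -/
lemma measure_iterate (hm : Conformal s r F β m) (n : ℕ) (v w : V) {B : Set (PathSpace s r)}
    (hB : MeasurableSet B) (hBw : B ⊆ cylV s r w) :
    m (cylV s r v ∩ (shift s r)^[n] ⁻¹' B) = Apow s r F β n v w * m B := by
  induction n generalizing v with
  | zero =>
    by_cases h : w = v
    · subst h
      simp [Apow, matPow, Set.inter_eq_right.2 hBw]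
    · have : cylV s r v ∩ B = ∅ := by
        refine Set.eq_empty_of_forall_notMem fun p hp => h ?_
        exact (hBw hp.2).symm.trans hp.1
      simp [Apow, matPow, h, this]
  | succ n ih =>
    rw [Function.iterate_succ, Set.preimage_comp, measure_step hm v (measurable_shift.iterate n hB)]
    simp_rw [ih]
    simp only [Apow, matPow, ← mul_assoc]
    rw [ENNReal.tsum_mul_right]

/-- The vector `v ↦ m(Z(v))` is harmonic. -/
lemma harmonic_cylV (hm : Conformal s r F β m) (v : V) :
    ∑' u, Amat s r F β v u * m (cylV s r u) = m (cylV s r v) := by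
  have := measure_step hm v MeasurableSet.univ
  simpa using this.symm

end Basic

/-! ### The Green function -/

section GreenFunction

lemma matPow_add (M : V → V → ℝ≥0∞) (n k : ℕ) (v w : V) :
    matPow M (n + k) v w = ∑' u, matPow M n v u * matPow M k u w := by
  induction n generalizing v with
  | zero =>
    rw [tsum_eq_single v]
    · simp [matPow]
    · intro u hu
      simp [matPow, hu]
  | succ n ih =>
    rw [Nat.succ_add]
    simp only [matPow, ih, ← ENNReal.tsum_mul_left, ← ENNReal.tsum_mul_right]
    rw [ENNReal.tsum_comm]
    simp only [mul_assoc]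

variable {s r : A → V} {F : A → ℝ} {β : ℝ}

lemma Apow_mul_Green_le (n : ℕ) (v u w : V) :
    Apow s r F β n v u * Green s r F β u w ≤ Green s r F β v w := by
  rw [Green, ← ENNReal.tsum_mul_left]
  calc ∑' k, Apow s r F β n v u * Apow s r F β k u w
      ≤ ∑' k, Apow s r F β (n + k) v w := by
        refine ENNReal.tsum_le_tsum fun k => ?_
        rw [Apow, Apow, Apow, matPow_add]
        exact ENNReal.le_tsum (f := fun u => matPow (Amat s r F β) n v u *
          matPow (Amat s r F β) k u w) u
    _ ≤ Green s r F β v w :=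
        ENNReal.tsum_comp_le_tsum_of_injective (add_right_injective n)
          (fun k => Apow s r F β k v w)

open Classical in
lemma Green_eq (u w : V) :
    Green s r F β u w = (if u = w then 1 else 0) + ∑' x, Amat s r F β u x * Green s r F β x w := by
  rw [Green, tsum_eq_zero_add' ENNReal.summable]
  congr 1
  · simp [Apow, matPow, Set.indicator_apply, eq_comm]
  · simp only [Green, ← ENNReal.tsum_mul_left]
    rw [ENNReal.tsum_comm]
    rfl

/-- Maximum principle: `G(·,w)` is dominated by the multiple of a harmonic vector `ψ` that
equals it at `w`. -/
lemma Green_mul_le {ψ : V → ℝ≥0∞} (hψ : ∀ v, ∑' u, Amat s r F β v u * ψ u = ψ v) (u w : V) :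
    Green s r F β u w * ψ w ≤ Green s r F β w w * ψ u := by
  have key : ∀ (n : ℕ) (u : V), (∑ k ∈ Finset.range n, Apow s r F β k u w) * ψ w ≤
      Green s r F β w w * ψ u := by
    intro n
    induction n with
    | zero => simp
    | succ n ih =>
      intro u
      by_cases h : u = w
      · subst h
        gcongr
        exact ENNReal.sum_le_tsum _
      · rw [Finset.sum_range_succ']
        have h0 : Apow s r F β 0 u w = 0 := by simp [Apow, matPow, Ne.symm h]
        have h1 : ∀ k, Apow s r F β (k + 1) u w = ∑' x, Amat s r F β u x * Apow s r F β k x w :=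
          fun k => rfl
        simp only [h0, h1, add_zero]
        rw [← Summable.tsum_finsetSum (fun _ _ => ENNReal.summable), ← ENNReal.tsum_mul_right, ← hψ u, ← ENNReal.tsum_mul_left]
        refine ENNReal.tsum_le_tsum fun x => ?_
        rw [← Finset.mul_sum, mul_assoc, mul_left_comm (Green s r F β w w)]
        exact mul_le_mul' le_rfl (ih x)
  rw [Green, ENNReal.tsum_eq_iSup_nat, ENNReal.iSup_mul]
  exact iSup_le fun n => key n u

variable {v₀ : V} (hv₀ : ∀ v : V, Green s r F β v₀ v ≠ 0 ∧ Green s r F β v₀ v ≠ ∞)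
include hv₀

lemma exists_Apow_ne_zero (v : V) : ∃ n, Apow s r F β n v₀ v ≠ 0 := by
  by_contra! h
  exact (hv₀ v).1 (by simp [Green, h])

lemma Green_ne_top (u w : V) : Green s r F β u w ≠ ∞ := by
  obtain ⟨n, hn⟩ := exists_Apow_ne_zero hv₀ u
  intro h
  have := Apow_mul_Green_le (s := s) (r := r) (F := F) (β := β) n v₀ u w
  rw [h, ENNReal.mul_top hn, top_le_iff] at this
  exact (hv₀ w).2 this

end GreenFunction

/-! ### Bounded harmonic functions and extremality -/

section Martingale

variable {s r : A → V} {F : A → ℝ} {β : ℝ} {m : Measure (PathSpace s r)}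

/-- Prefix an arrow to a sequence of arrows. -/
def consSeq (a : A) (x : ℕ → A) : ℕ → A := fun i => Nat.casesOn i a x

lemma measurable_consSeq (a : A) :
    @Measurable _ _ (@MeasurableSpace.pi ℕ (fun _ => A) (fun _ => ⊤))
      (@MeasurableSpace.pi ℕ (fun _ => A) (fun _ => ⊤)) (consSeq a) := by
  let _ : MeasurableSpace A := ⊤
  refine measurable_pi_lambda _ fun i => ?_
  cases i with
  | zero => exact measurable_const
  | succ i => exact measurable_pi_apply i

lemma consSeq_shift (p : PathSpace s r) : consSeq (p.seq 0) (shift s r p).seq = p.seq := by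
  funext i
  cases i <;> rfl

lemma measurableSet_seq_mem {T : Set (ℕ → A)}
    (hT : MeasurableSet[@MeasurableSpace.pi ℕ (fun _ => A) (fun _ => ⊤)] T) :
    MeasurableSet {p : PathSpace s r | p.seq ∈ T} := ⟨T, hT, rfl⟩

/-- The Markov property conditionally on the first `i` arrows: an event determined by those
arrows only affects the mass of a tail event in `Z(w)` through a constant factor. -/
lemma measure_history [Countable A] (hm : Conformal s r F β m) (i : ℕ) (Q : Set (ℕ → A))
    (hQ : MeasurableSet[@MeasurableSpace.pi ℕ (fun _ => A) (fun _ => ⊤)] Q)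
    (hdep : ∀ x y : ℕ → A, (∀ j < i, x j = y j) → x ∈ Q → y ∈ Q) (u w : V) :
    ∃ c : ℝ≥0∞, ∀ B : Set (PathSpace s r), MeasurableSet B → B ⊆ cylV s r w →
      m (cylV s r u ∩ ({p | p.seq ∈ Q} ∩ (shift s r)^[i] ⁻¹' B)) = c * m B := by
  induction i generalizing Q u with
  | zero =>
    by_cases hne : Q.Nonempty
    · obtain ⟨x, hx⟩ := hne
      have hall : ∀ y, y ∈ Q := fun y => hdep x y (by simp) hx
      refine ⟨Apow s r F β 0 u w, fun B hB hBw => ?_⟩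
      rw [← measure_iterate hm 0 u w hB hBw]
      simp [hall]
    · refine ⟨0, fun B _ _ => ?_⟩
      simp [Set.not_nonempty_iff_eq_empty.1 hne]
  | succ i ih =>
    have hQa : ∀ a, MeasurableSet[@MeasurableSpace.pi ℕ (fun _ => A) (fun _ => ⊤)]
        (consSeq a ⁻¹' Q) := fun a => measurable_consSeq a hQ
    have hda : ∀ a, ∀ x y : ℕ → A, (∀ j < i, x j = y j) → x ∈ consSeq a ⁻¹' Q →
        y ∈ consSeq a ⁻¹' Q := by
      intro a x y hxy hx
      refine hdep _ _ (fun j hj => ?_) hx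
      cases j with
      | zero => rfl
      | succ j => exact hxy j (by omega)
    choose c hc using fun a : A => ih (consSeq a ⁻¹' Q) (hQa a) (hda a) (r a)
    refine ⟨∑' a : {a : A // s a = u}, ENNReal.ofReal (Real.exp (-(β * F a.1))) * c a.1,
      fun B hB hBw => ?_⟩
    rw [measure_cylV_inter m u
      ((measurableSet_seq_mem hQ).inter (measurable_shift.iterate (i + 1) hB)),
      ← ENNReal.tsum_mul_right]
    refine tsum_congr fun a => ?_
    rw [mul_assoc, ← hc a.1 B hB hBw, ← measure_cylA_inter hm a.1
      ((measurableSet_seq_mem (hQa a.1)).inter (measurable_shift.iterate i hB))]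
    congr 1
    ext p
    refine and_congr_right fun (hp : p.seq 0 = a.1) => ?_
    have : consSeq a.1 (shift s r p).seq = p.seq := by rw [← hp, consSeq_shift]
    simp [this]

lemma setLIntegral_vert [Countable V] (m : Measure (PathSpace s r)) (T : Set (PathSpace s r))
    (i : ℕ) (g : V → ℝ≥0∞) :
    ∫⁻ p in T, g (s (p.seq i)) ∂m = ∑' w, g w * m (T ∩ {p | s (p.seq i) = w}) := by
  let _ : MeasurableSpace V := ⊤
  have hX : Measurable (fun p : PathSpace s r => s (p.seq i)) :=
    fun U _ => measurableSet_vert i U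
  rw [← lintegral_map (f := g) (measurable_from_top) hX, lintegral_countable']
  refine tsum_congr fun w => ?_
  rw [Measure.map_apply hX (measurableSet_singleton w),
    Measure.restrict_apply (hX (measurableSet_singleton w)), Set.inter_comm]
  rfl

/-- `g(X_i)` and `g(X_{i+1})` have the same integral over an event determined by the first `i`
arrows, `X_i` being the `i`-th vertex. -/
lemma setLIntegral_succ [Countable A] [Countable V] (hm : Conformal s r F β m) {g : V → ℝ≥0∞}
    (hg : ∀ v, ∑' w, Amat s r F β v w * (g w * m (cylV s r w)) = g v * m (cylV s r v))
    (i : ℕ) (Q : Set (ℕ → A))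
    (hQ : MeasurableSet[@MeasurableSpace.pi ℕ (fun _ => A) (fun _ => ⊤)] Q)
    (hdep : ∀ x y : ℕ → A, (∀ j < i, x j = y j) → x ∈ Q → y ∈ Q) (u : V) :
    ∫⁻ p in cylV s r u ∩ {p | p.seq ∈ Q}, g (s (p.seq i)) ∂m =
      ∫⁻ p in cylV s r u ∩ {p | p.seq ∈ Q}, g (s (p.seq (i + 1))) ∂m := by
  choose c hc using measure_history hm i Q hQ hdep u
  rw [setLIntegral_vert m _, setLIntegral_vert m _]
  have h1 : ∀ w, m (cylV s r u ∩ {p | p.seq ∈ Q} ∩ {p | s (p.seq i) = w}) =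
      c w * m (cylV s r w) := by
    intro w
    rw [← hc w _ (measurableSet_cylV w) subset_rfl, Set.inter_assoc]
    congr 3
    ext p
    simp [cylV, shift_iterate_seq]
  have h2 : ∀ w', m (cylV s r u ∩ {p | p.seq ∈ Q} ∩ {p | s (p.seq (i + 1)) = w'}) =
      ∑' w, c w * (Amat s r F β w w' * m (cylV s r w')) := by
    intro w'
    have hpart : cylV s r u ∩ {p | p.seq ∈ Q} ∩ {p | s (p.seq (i + 1)) = w'} =
        ⋃ w, cylV s r u ∩ ({p | p.seq ∈ Q} ∩ (shift s r)^[i] ⁻¹'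
          (cylV s r w ∩ shift s r ⁻¹' cylV s r w')) := by
      ext p
      simp [cylV, shift, shift_iterate_seq, and_assoc, add_comm]
    rw [hpart, measure_iUnion]
    · refine tsum_congr fun w => ?_
      rw [hc w _ ((measurableSet_cylV w).inter (measurable_shift (measurableSet_cylV w')))
        Set.inter_subset_left]
      congr 1
      have := measure_iterate hm 1 w w' (measurableSet_cylV w') subset_rfl
      simp only [Function.iterate_one] at this
      rw [this]
      congr 1
      simp only [Apow, matPow]
      rw [tsum_eq_single w']
      · simp
      · intro x hx
        simp [hx.symm]
    · intro w₁ w₂ hw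
      refine Set.disjoint_left.2 fun p hp hq => hw ?_
      exact hp.2.2.1.symm.trans hq.2.2.1
    · intro w
      exact (measurableSet_cylV u).inter ((measurableSet_seq_mem hQ).inter
        (measurable_shift.iterate i ((measurableSet_cylV w).inter
          (measurable_shift (measurableSet_cylV w')))))
  simp_rw [h1, h2, ← ENNReal.tsum_mul_left]
  rw [ENNReal.tsum_comm]
  refine tsum_congr fun w => ?_
  rw [mul_left_comm, ← hg w, ← ENNReal.tsum_mul_left]
  refine tsum_congr fun w' => ?_
  ring

/-- The filtration on the path space whose `i`-th σ-algebra is generated by the first `i + 1`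
arrows. -/
def arrowFiltration (s r : A → V) :
    Filtration ℕ (inferInstance : MeasurableSpace (PathSpace s r)) where
  seq i := MeasurableSpace.comap (fun p (j : Fin (i + 1)) => p.seq j)
    (@MeasurableSpace.pi (Fin (i + 1)) (fun _ => A) (fun _ => ⊤))
  mono' := by
    let _ : MeasurableSpace A := ⊤
    intro i k hik
    rintro _ ⟨T, hT, rfl⟩
    refine ⟨(fun (x : Fin (k + 1) → A) (j : Fin (i + 1)) => x (Fin.castLE (by omega) j)) ⁻¹' T,
      ?_, rfl⟩
    exact (measurable_pi_lambda _ fun j => measurable_pi_apply _) hT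
  le' := by
    let _ : MeasurableSpace A := ⊤
    intro i
    rintro _ ⟨T, hT, rfl⟩
    have : Measurable (fun (p : PathSpace s r) (j : Fin (i + 1)) => p.seq j) :=
      measurable_pi_lambda _ fun j => measurable_seq j.1
    exact this hT

/-- Martingale convergence: `g` converges along almost every path if `g · m(Z(·))` is
harmonic and `g ≤ 1`. -/
lemma ae_tendsto_vert [Countable A] [Countable V] (hm : Conformal s r F β m) {g : V → ℝ≥0∞}
    (hg1 : ∀ v, g v ≤ 1)
    (hg : ∀ v, ∑' w, Amat s r F β v w * (g w * m (cylV s r w)) = g v * m (cylV s r v)) (u : V) :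
    ∀ᵐ p ∂(m.restrict (cylV s r u)),
      ∃ c, Tendsto (fun k => g (s (p.seq k))) atTop (𝓝 c) := by
  have hfin : IsFiniteMeasure (m.restrict (cylV s r u)) :=
    ⟨by simpa using lt_top_iff_ne_top.2 (hm.2.1 u)⟩
  have hmeas : ∀ i, Measurable (fun p : PathSpace s r => g (s (p.seq i))) := fun i =>
    @Measurable.comp _ A _ _ ⊤ _ (fun a => g (s a)) _ measurable_from_top (measurable_seq i)
  have hreal1 : ∀ v, ‖(g v).toReal‖ ≤ 1 := fun v => by
    rw [Real.norm_of_nonneg ENNReal.toReal_nonneg]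
    exact ENNReal.toReal_mono ENNReal.one_ne_top (hg1 v)
  -- The index is offset by one: `s (p.seq (i + 1)) = r (p.seq i)` depends on the first `i + 1`
  -- arrows only.
  have hmart : Martingale (fun i (p : PathSpace s r) => (g (s (p.seq (i + 1)))).toReal)
      (arrowFiltration s r) (m.restrict (cylV s r u)) := by
    refine martingale_of_setIntegral_eq_succ ?_ ?_ ?_
    · intro i
      refine Measurable.stronglyMeasurable ?_
      have : (fun p : PathSpace s r => (g (s (p.seq (i + 1)))).toReal) =
          (fun x : Fin (i + 1) → A => (g (r (x (Fin.last i)))).toReal) ∘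
            (fun p (j : Fin (i + 1)) => p.seq j) := by
        funext p
        simp [p.compat i]
      change Measurable[arrowFiltration s r i]
        (fun p : PathSpace s r => (g (s (p.seq (i + 1)))).toReal)
      rw [this]
      let _ : MeasurableSpace A := ⊤
      refine Measurable.comp (Measurable.comp (g := fun a => (g (r a)).toReal)
        measurable_from_top (measurable_pi_apply (Fin.last i))) ?_
      exact comap_measurable _
    · intro i
      refine Integrable.of_bound (hmeas (i + 1)).ennreal_toReal.aestronglyMeasurable 1 ?_
      exact Eventually.of_forall fun p => hreal1 _
    · rintro i _ ⟨T, hT, rfl⟩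
      let _ : MeasurableSpace A := ⊤
      have hT' : MeasurableSet ((fun (x : ℕ → A) (j : Fin (i + 1)) => x j) ⁻¹' T) :=
        (measurable_pi_lambda _ fun j => measurable_pi_apply _) hT
      have hS := setLIntegral_succ hm hg (i + 1) _ hT' (by
        intro x y hxy hx
        have : (fun j : Fin (i + 1) => x j) = fun j : Fin (i + 1) => y j :=
          funext fun j => hxy j j.2
        simpa [Set.mem_preimage, this] using hx) u
      have hT'' : MeasurableSet ((fun (p : PathSpace s r) (j : Fin (i + 1)) => p.seq j) ⁻¹' T) :=
        measurableSet_seq_mem hT'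
      rw [Measure.restrict_restrict hT'',
        integral_toReal (hmeas _).aemeasurable
          (Eventually.of_forall fun p => (hg1 _).trans_lt ENNReal.one_lt_top),
        integral_toReal (hmeas _).aemeasurable
          (Eventually.of_forall fun p => (hg1 _).trans_lt ENNReal.one_lt_top), Set.inter_comm]
      exact congrArg ENNReal.toReal hS
  have hconv := hmart.submartingale.exists_ae_tendsto_of_bdd
    (R := (m.restrict (cylV s r u) Set.univ).toNNReal) (fun n => by
      rw [ENNReal.coe_toNNReal (measure_ne_top _ _), eLpNorm_one_eq_lintegral_enorm,
        ← one_mul (m.restrict (cylV s r u) Set.univ), ← lintegral_const]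
      refine lintegral_mono fun p => ?_
      rw [← ofReal_norm, ← ENNReal.ofReal_one]
      exact ENNReal.ofReal_le_ofReal (hreal1 _))
  filter_upwards [hconv] with p ⟨c, hc⟩
  refine ⟨ENNReal.ofReal c, ?_⟩
  rw [← tendsto_add_atTop_iff_nat 1]
  refine (ENNReal.tendsto_ofReal hc).congr fun k => ?_
  exact ENNReal.ofReal_toReal ((hg1 _).trans_lt ENNReal.one_lt_top).ne

end Martingale

section Extremal

variable {s r : A → V} {F : A → ℝ} {β : ℝ} {m : Measure (PathSpace s r)}

lemma image_shift_eq (B : Set (PathSpace s r)) (a : A) :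
    B ∩ cylA s r a = cylA s r a ∩ shift s r ⁻¹' (shift s r '' (B ∩ cylA s r a)) := by
  ext p
  constructor
  · rintro ⟨hB, ha⟩
    exact ⟨ha, p, ⟨hB, ha⟩, rfl⟩
  · rintro ⟨ha, q, ⟨hq, hqa⟩, hqp⟩
    have : q = p := by
      have h : q.seq = p.seq := by
        rw [← consSeq_shift q, ← consSeq_shift p, hqp, show q.seq 0 = a from hqa,
          show p.seq 0 = a from ha]
      cases q
      cases p
      simpa using h
    exact ⟨this ▸ hq, ha⟩

lemma measurableSet_image_shift {B : Set (PathSpace s r)} (hB : MeasurableSet B) (a : A) :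
    MeasurableSet (shift s r '' (B ∩ cylA s r a)) := by
  obtain ⟨T, hT, rfl⟩ := hB
  have : shift s r '' ((fun p : PathSpace s r => p.seq) ⁻¹' T ∩ cylA s r a) =
      cylV s r (r a) ∩ {q | q.seq ∈ consSeq a ⁻¹' T} := by
    ext q
    constructor
    · rintro ⟨p, ⟨hp, hpa⟩, rfl⟩
      have hpa : p.seq 0 = a := hpa
      refine ⟨?_, ?_⟩
      · change s (p.seq 1) = r a
        rw [← hpa]
        exact (p.compat 0).symm
      · change consSeq a (shift s r p).seq ∈ T
        rw [← hpa, consSeq_shift]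
        exact hp
    · rintro ⟨hq, hqT⟩
      exact ⟨⟨consSeq a q.seq, fun i => by
          cases i with
          | zero => exact Eq.symm hq
          | succ i => exact q.compat i⟩, ⟨hqT, rfl⟩, rfl⟩
  rw [this]
  exact (measurableSet_cylV _).inter (measurableSet_seq_mem (measurable_consSeq a hT))

/-- A shift-invariant density preserves conformality. -/
lemma conformal_withDensity (hm : Conformal s r F β m) {h : PathSpace s r → ℝ≥0∞}
    (hh : Measurable h) (hinv : ∀ p, h (shift s r p) = h p) (h1 : ∀ p, h p ≤ 1)
    (h0 : m.withDensity h ≠ 0) : Conformal s r F β (m.withDensity h) := by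
  refine ⟨h0, fun v => ?_, fun a B hB => ?_⟩
  · rw [withDensity_apply _ (measurableSet_cylV v)]
    refine ne_top_of_le_ne_top (hm.2.1 v) ?_
    calc ∫⁻ p in cylV s r v, h p ∂m ≤ ∫⁻ p in cylV s r v, 1 ∂m := lintegral_mono h1
      _ = m (cylV s r v) := by simp
  · have himg := image_shift_eq B a
    have hC := measurableSet_image_shift hB a
    have hCV : shift s r '' (B ∩ cylA s r a) ⊆ cylV s r (r a) := by
      rintro _ ⟨p, ⟨-, hpa⟩, rfl⟩
      change s (p.seq 1) = r a
      rw [← (show p.seq 0 = a from hpa)]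
      exact (p.compat 0).symm
    set C := shift s r '' (B ∩ cylA s r a) with hCdef
    have hmap : (m.restrict (cylA s r a)).map (shift s r) =
        ENNReal.ofReal (Real.exp (-(β * F a))) • m.restrict (cylV s r (r a)) := by
      refine Measure.ext fun C hC => ?_
      rw [Measure.map_apply measurable_shift hC, Measure.restrict_apply (measurable_shift hC),
        Set.inter_comm, measure_cylA_inter hm a hC, Measure.smul_apply,
        Measure.restrict_apply hC, Set.inter_comm, smul_eq_mul]
    have hBa : (m.withDensity h) (B ∩ cylA s r a) = ENNReal.ofReal (Real.exp (-(β * F a))) *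
        (m.withDensity h) C := by
      rw [withDensity_apply _ hC, withDensity_apply _ (hB.inter (measurableSet_cylA a))]
      rw [himg, Set.inter_comm, ← Measure.restrict_restrict (measurable_shift hC)]
      rw [lintegral_congr fun p => (hinv p).symm]
      rw [← setLIntegral_map hC hh measurable_shift, hmap, Measure.restrict_smul,
        lintegral_smul_measure, Measure.restrict_restrict hC, Set.inter_eq_left.2 hCV, smul_eq_mul]
    rw [hBa, ← mul_assoc, ← ENNReal.ofReal_mul (Real.exp_nonneg _), ← Real.exp_add]
    simp

/-- Extremality forces every bounded harmonic function to be constant: the boundary function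
`limsup g(X_k)` is a shift-invariant density of a conformal measure dominated by `m`. -/
lemma bounded_harmonic_const [Countable A] [Countable V] (hm : ExtremalConformal s r F β m)
    {g : V → ℝ≥0∞} (hg1 : ∀ v, g v ≤ 1) (hg0 : ∀ v, g v ≠ 0)
    (hg : ∀ v, ∑' w, Amat s r F β v w * (g w * m (cylV s r w)) = g v * m (cylV s r v)) {v₀ : V}
    (hnorm : m (cylV s r v₀) = 1) (v : V) : g v * m (cylV s r v) = g v₀ * m (cylV s r v) := by
  set h : PathSpace s r → ℝ≥0∞ := fun p => limsup (fun k => g (s (p.seq k))) atTop with hdef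
  have hmeas : ∀ i, Measurable (fun p : PathSpace s r => g (s (p.seq i))) := fun i =>
    @Measurable.comp _ A _ _ ⊤ _ (fun a => g (s a)) _ measurable_from_top (measurable_seq i)
  have hh : Measurable h := Measurable.limsup hmeas
  have hinv : ∀ p, h (shift s r p) = h p := fun p =>
    limsup_nat_add (fun k => g (s (p.seq k))) 1
  have h1 : ∀ p, h p ≤ 1 := fun p =>
    limsup_le_of_le (h := Eventually.of_forall fun k => hg1 _)
  have hint : ∀ k u, ∫⁻ p in cylV s r u, g (s (p.seq k)) ∂m = g u * m (cylV s r u) := by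
    intro k u
    induction k with
    | zero =>
      rw [setLIntegral_congr_fun (g := fun _ => g u) (measurableSet_cylV u)
        (fun p (hp : s (p.seq 0) = u) => by simp [hp])]
      simp
    | succ k ih =>
      have := setLIntegral_succ hm.1 hg k Set.univ MeasurableSet.univ (fun _ _ _ _ => trivial) u
      simp only [Set.mem_univ, Set.ofPred_true, Set.inter_univ] at this
      rw [← this, ih]
  have hint' : ∀ u, (m.withDensity h) (cylV s r u) = g u * m (cylV s r u) := by
    intro u
    rw [withDensity_apply _ (measurableSet_cylV u)]
    have hlim := tendsto_lintegral_of_dominated_convergence (μ := m.restrict (cylV s r u))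
      (F := fun k p => g (s (p.seq k))) (f := h) (fun _ => 1) hmeas
      (fun k => Eventually.of_forall fun p => hg1 _) (by simpa using hm.1.2.1 u) (by
        filter_upwards [ae_tendsto_vert hm.1 hg1 hg u] with p ⟨c, hc⟩
        rw [hdef]
        simpa [hc.limsup_eq] using hc)
    simp only [hint] at hlim
    exact tendsto_nhds_unique hlim tendsto_const_nhds |>.symm ▸ rfl
  have h0 : m.withDensity h ≠ 0 := by
    intro h
    have := hint' v₀
    rw [h, hnorm] at this
    exact hg0 v₀ (by simpa using this.symm)
  obtain ⟨c, -, hc⟩ := hm.2 _ (conformal_withDensity hm.1 hh hinv h1 h0) (fun B hB => by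
    rw [withDensity_apply _ hB]
    calc ∫⁻ p in B, h p ∂m ≤ ∫⁻ p in B, 1 ∂m := lintegral_mono h1
      _ = m B := by simp)
  have hcv : ∀ u, g u * m (cylV s r u) = c * m (cylV s r u) := fun u => by
    rw [← hint' u, hc]
    rfl
  have hc0 := hcv v₀
  rw [hnorm, mul_one, mul_one] at hc0
  rw [hcv, hc0]

end Extremal

/-! ### A maximal inequality from last exit decompositions -/

section Maximal

variable {s r : A → V} {F : A → ℝ} {β : ℝ} {m : Measure (PathSpace s r)}

/-- The paths that start at `w` and avoid `D` from then on. -/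
def escape (s r : A → V) (D : Set V) (w : V) : Set (PathSpace s r) :=
  {p | s (p.seq 0) = w ∧ ∀ i, s (p.seq (i + 1)) ∉ D}

lemma measurableSet_escape (D : Set V) (w : V) : MeasurableSet (escape s r D w) := by
  have : escape s r D w = cylV s r w ∩ ⋂ i, {p | s (p.seq (i + 1)) ∈ Dᶜ} := by
    ext p
    simp [escape, cylV]
  rw [this]
  exact (measurableSet_cylV w).inter (MeasurableSet.iInter fun i => measurableSet_vert _ _)

lemma mem_escape_iterate {D : Set V} {w : V} {n : ℕ} {p : PathSpace s r} :
    (shift s r)^[n] p ∈ escape s r D w ↔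
      s (p.seq n) = w ∧ ∀ i, n < i → s (p.seq i) ∉ D := by
  simp only [escape, Set.mem_ofPred_eq, shift_iterate_seq, zero_add]
  refine and_congr_right fun _ => ⟨fun h i hi => ?_, fun h i => h _ (by omega)⟩
  have := h (i - n - 1)
  rwa [show i - n - 1 + 1 + n = i by omega] at this

variable [Countable A] (hm : Conformal s r F β m) {v₀ : V}
  (hv₀ : ∀ v : V, Green s r F β v₀ v ≠ 0 ∧ Green s r F β v₀ v ≠ ∞)
include hm

include hv₀ in
/-- Almost every path from `v₀` visits each vertex only finitely often. -/
lemma ae_wandering [Countable V] :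
    ∀ᵐ p ∂(m.restrict (cylV s r v₀)), ∀ w, ∀ᶠ k in atTop, s (p.seq k) ≠ w := by
  rw [ae_all_iff]
  intro w
  have hsum : ∑' k, (m.restrict (cylV s r v₀)) {p | s (p.seq k) = w} ≠ ∞ := by
    have : ∀ k, (m.restrict (cylV s r v₀)) {p | s (p.seq k) = w} =
        Apow s r F β k v₀ w * m (cylV s r w) := by
      intro k
      rw [← measure_iterate hm k v₀ w (measurableSet_cylV w) subset_rfl,
        Measure.restrict_apply
          (show MeasurableSet {p : PathSpace s r | s (p.seq k) = w} from measurableSet_vert k {w}),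
        Set.inter_comm]
      congr 2
      ext p
      simp [cylV, shift_iterate_seq]
    simp_rw [this]
    rw [ENNReal.tsum_mul_right]
    exact ENNReal.mul_ne_top (hv₀ w).2 (hm.2.1 w)
  exact ae_eventually_notMem hsum

/-- Almost every path from `v₀` stays where `m(Z(·))` is nonzero. -/
lemma ae_cylV_ne_zero [Countable V] (v₀ : V) :
    ∀ᵐ p ∂(m.restrict (cylV s r v₀)), ∀ k, m (cylV s r (s (p.seq k))) ≠ 0 := by
  have : ∀ᵐ p ∂(m.restrict (cylV s r v₀)), ∀ k w, m (cylV s r w) = 0 → s (p.seq k) ≠ w := by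
    simp only [ae_all_iff]
    intro k w hw
    rw [ae_iff, Measure.restrict_apply (by simpa using measurableSet_vert k {w})]
    have h := measure_iterate hm k v₀ w (measurableSet_cylV w) subset_rfl
    rw [hw, mul_zero] at h
    refine measure_mono_null (fun p hp => ?_) h
    refine ⟨hp.2, ?_⟩
    simpa [cylV, shift_iterate_seq] using hp.1
  filter_upwards [this] with p hp k hk
  exact hp k _ hk rfl

lemma tsum_last_exit (D : Finset V) (v : V) :
    ∑' x : D × ℕ, m (cylV s r v ∩ (shift s r)^[x.2] ⁻¹' escape s r D x.1) =
      ∑' w : D, Green s r F β v w * m (escape s r D w) := by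
  rw [ENNReal.tsum_prod (f := fun (w : D) (n : ℕ) =>
    m (cylV s r v ∩ (shift s r)^[n] ⁻¹' escape s r D w))]
  refine tsum_congr fun w => ?_
  rw [Green, ← ENNReal.tsum_mul_right]
  exact tsum_congr fun n =>
    measure_iterate hm n v w (measurableSet_escape _ _) fun p hp => hp.1

lemma tsum_Green_escape_le (D : Finset V) (v : V) :
    ∑' w : D, Green s r F β v w * m (escape s r D w) ≤ m (cylV s r v) := by
  rw [← tsum_last_exit hm, ← measure_iUnion]
  · exact measure_mono (Set.iUnion_subset fun _ => Set.inter_subset_left)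
  · rintro ⟨w₁, n₁⟩ ⟨w₂, n₂⟩ hne
    refine Set.disjoint_left.2 fun p hp hq => hne ?_
    obtain ⟨h1, h1'⟩ := mem_escape_iterate.1 hp.2
    obtain ⟨h2, h2'⟩ := mem_escape_iterate.1 hq.2
    have hn : n₁ = n₂ := by
      rcases lt_trichotomy n₁ n₂ with h | h | h
      · exact absurd (h2 ▸ w₂.2) (h1' n₂ h)
      · exact h
      · exact absurd (h1 ▸ w₁.2) (h2' n₁ h)
    subst hn
    exact Prod.ext (Subtype.ext (h1.symm.trans h2)) rfl
  · exact fun x => (measurableSet_cylV v).inter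
      (measurable_shift.iterate _ (measurableSet_escape _ _))

include hv₀ in
lemma measure_hit_le [Countable V] (D : Finset V) :
    m (cylV s r v₀ ∩ {p | ∃ k, s (p.seq k) ∈ D}) ≤
      ∑' w : D, Green s r F β v₀ w * m (escape s r D w) := by
  rw [← tsum_last_exit hm]
  refine le_trans ?_ (measure_iUnion_le _)
  refine measure_mono_ae ?_
  have hw := (ae_restrict_iff' (measurableSet_cylV v₀)).1 (ae_wandering hm hv₀)
  filter_upwards [hw] with p hp hpD
  have hpv : p ∈ cylV s r v₀ := hpD.1
  obtain ⟨k, hk⟩ := hpD.2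
  have hfin : ∀ᶠ i in atTop, ∀ w ∈ D, s (p.seq i) ≠ w :=
    (Filter.eventually_all_finset D).2 fun w _ => hp hpv w
  obtain ⟨N, hN⟩ := eventually_atTop.1 hfin
  have hN' : ∀ i, N ≤ i → s (p.seq i) ∉ D := fun i hi h => hN i hi _ h rfl
  classical
  -- The last visit to `D` is the largest visit time below `N`.
  let P : ℕ → Prop := fun i => s (p.seq i) ∈ D
  have hkN : k ≤ N := by
    by_contra! h
    exact hN' k h.le hk
  have hL : P (Nat.findGreatest P N) := Nat.findGreatest_spec (P := P) hkN hk
  refine Set.mem_iUnion.2 ⟨(⟨s (p.seq (Nat.findGreatest P N)), hL⟩, Nat.findGreatest P N), hpv, ?_⟩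
  refine mem_escape_iterate.2 ⟨rfl, fun i hi hiD => ?_⟩
  by_cases hiN : i ≤ N
  · exact Nat.findGreatest_is_greatest hi hiN hiD
  · exact hN' i (by omega) hiD

include hv₀ in
/-- Maximal inequality: if `lam * G(v₀,·) ≤ ∑ y(u) G(u,·)` on `D`, the mass of the paths from
`v₀` that hit `D` is at most `lam⁻¹ ∑ y(u) m(Z(u))`. For finite `D`, both Green functions are
compared with the distribution of the last exit from `D`. -/
lemma maximal_inequality [Countable V] (y : V → ℝ≥0∞) (lam : ℝ≥0∞) (D : Set V)
    (hD : ∀ w ∈ D, lam * Green s r F β v₀ w ≤ ∑' u, y u * Green s r F β u w) :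
    lam * m (cylV s r v₀ ∩ {p | ∃ k, s (p.seq k) ∈ D}) ≤ ∑' u, y u * m (cylV s r u) := by
  have hfin : ∀ D' : Finset V, (D' : Set V) ⊆ D →
      lam * m (cylV s r v₀ ∩ {p | ∃ k, s (p.seq k) ∈ D'}) ≤ ∑' u, y u * m (cylV s r u) := by
    intro D' hD'
    calc lam * m (cylV s r v₀ ∩ {p | ∃ k, s (p.seq k) ∈ D'})
        ≤ lam * ∑' w : D', Green s r F β v₀ w * m (escape s r D' w) :=
          mul_le_mul' le_rfl (measure_hit_le hm hv₀ D')
      _ = ∑' w : D', lam * Green s r F β v₀ w * m (escape s r D' w) := by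
          rw [← ENNReal.tsum_mul_left]
          simp only [mul_assoc]
      _ ≤ ∑' w : D', (∑' u, y u * Green s r F β u w) * m (escape s r D' w) :=
          ENNReal.tsum_le_tsum fun w => mul_le_mul' (hD w (hD' w.2)) le_rfl
      _ = ∑' u, y u * ∑' w : D', Green s r F β u w * m (escape s r D' w) := by
          simp only [← ENNReal.tsum_mul_left, ← ENNReal.tsum_mul_right, mul_assoc]
          rw [ENNReal.tsum_comm]
      _ ≤ ∑' u, y u * m (cylV s r u) :=
          ENNReal.tsum_le_tsum fun u => mul_le_mul' le_rfl (tsum_Green_escape_le hm D' u)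
  have hunion : cylV s r v₀ ∩ {p | ∃ k, s (p.seq k) ∈ D} =
      ⋃ D' : {D' : Finset V // (D' : Set V) ⊆ D}, cylV s r v₀ ∩ {p | ∃ k, s (p.seq k) ∈ D'.1} := by
    ext p
    simp only [Set.mem_inter_iff, Set.mem_ofPred_eq, Set.mem_iUnion]
    constructor
    · rintro ⟨hp, k, hk⟩
      exact ⟨⟨{s (p.seq k)}, by simpa using hk⟩, hp, k, by simp⟩
    · rintro ⟨D', hp, k, hk⟩
      exact ⟨hp, k, D'.2 hk⟩
  have hdir : Directed (· ⊆ ·) (fun D' : {D' : Finset V // (D' : Set V) ⊆ D} =>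
      cylV s r v₀ ∩ {p | ∃ k, s (p.seq k) ∈ D'.1}) := by
    classical
    intro D₁ D₂
    refine ⟨⟨D₁.1 ∪ D₂.1, by simpa using ⟨D₁.2, D₂.2⟩⟩, ?_, ?_⟩
    · rintro p ⟨hp, k, hk⟩
      exact ⟨hp, k, Finset.mem_union_left _ hk⟩
    · rintro p ⟨hp, k, hk⟩
      exact ⟨hp, k, Finset.mem_union_right _ hk⟩
  rw [hunion, hdir.measure_iUnion, ENNReal.mul_iSup]
  exact iSup_le fun D' => hfin D'.1 D'.2

include hv₀ in
/-- Visiting `T` infinitely often is a shift-invariant event; since every vertex is reachable from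
`v₀`, it is null as soon as it is null among the paths from `v₀`. -/
lemma measure_frequently_eq_zero [Countable V] (T : Set V)
    (h : m (cylV s r v₀ ∩ {p | ∃ᶠ k in atTop, s (p.seq k) ∈ T}) = 0) :
    m {p | ∃ᶠ k in atTop, s (p.seq k) ∈ T} = 0 := by
  have hmeas : MeasurableSet {p : PathSpace s r | ∃ᶠ k in atTop, s (p.seq k) ∈ T} := by
    have : {p : PathSpace s r | ∃ᶠ k in atTop, s (p.seq k) ∈ T} =
        ⋂ N : ℕ, ⋃ k : ℕ, ⋃ _ : N ≤ k, {p | s (p.seq k) ∈ T} := by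
      ext p
      simp [frequently_atTop]
    rw [this]
    exact MeasurableSet.iInter fun N => MeasurableSet.iUnion fun k =>
      MeasurableSet.iUnion fun _ => measurableSet_vert k T
  have hcov : {p : PathSpace s r | ∃ᶠ k in atTop, s (p.seq k) ∈ T} ⊆
      ⋃ w, cylV s r w ∩ {p | ∃ᶠ k in atTop, s (p.seq k) ∈ T} := fun p hp =>
    Set.mem_iUnion.2 ⟨s (p.seq 0), rfl, hp⟩
  refine measure_mono_null hcov (measure_iUnion_null fun w => ?_)
  obtain ⟨n, hn⟩ := exists_Apow_ne_zero hv₀ w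
  have hit := measure_iterate hm n v₀ w ((measurableSet_cylV w).inter hmeas) Set.inter_subset_left
  have h0 : m (cylV s r v₀ ∩ (shift s r)^[n] ⁻¹'
      (cylV s r w ∩ {p | ∃ᶠ k in atTop, s (p.seq k) ∈ T})) = 0 := by
    refine measure_mono_null ?_ h
    intro p hp
    refine ⟨hp.1, ?_⟩
    have h2 : ∃ᶠ k in atTop, s (((shift s r)^[n] p).seq k) ∈ T := hp.2.2
    simp only [shift_iterate_seq] at h2
    exact (tendsto_add_atTop_nat n).frequently h2
  rw [h0] at hit
  exact (mul_eq_zero.1 hit.symm).resolve_left hn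

end Maximal

/-! ### Hahn-Banach in `ℓ¹` -/

section Duality

variable {s r : A → V} {F : A → ℝ} {β : ℝ} {m : Measure (PathSpace s r)}

lemma Amat_mul_ne_top [Countable A] (hm : Conformal s r F β m) (u w : V) :
    Amat s r F β u w * m (cylV s r w) ≠ ∞ :=
  ENNReal.ne_top_of_tsum_ne_top ((harmonic_cylV hm u).symm ▸ hm.2.1 u) w

lemma hasSum_row [Countable A] (hm : Conformal s r F β m) (u : V) :
    HasSum (fun w => (Amat s r F β u w * m (cylV s r w)).toReal) (m (cylV s r u)).toReal := by
  have h := (harmonic_cylV hm u)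
  rw [← h, ENNReal.tsum_toReal_eq (Amat_mul_ne_top hm u)]
  exact (ENNReal.summable_toReal (h.symm ▸ hm.2.1 u)).hasSum

/-- The row `w ↦ A(β)_{u,w} m(Z(w))` as an element of `ℓ¹(V)`. -/
noncomputable def rowVec [Countable A] (hm : Conformal s r F β m) (u : V) :
    lp (fun _ : V => ℝ) 1 :=
  ⟨fun w => (Amat s r F β u w * m (cylV s r w)).toReal, by
    refine memℓp_gen ?_
    simpa using (hasSum_row hm u).summable⟩

open Classical in
/-- The element `m(Z(u)) e_u - ∑_w A(β)_{u,w} m(Z(w)) e_w` of `ℓ¹(V)`, i.e. the `u`-th row of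
`1 - A(β)` weighted by `m(Z(·))`. -/
noncomputable def coboundary [Countable A] (hm : Conformal s r F β m) (u : V) :
    lp (fun _ : V => ℝ) 1 :=
  lp.single 1 u (m (cylV s r u)).toReal - rowVec hm u

/-- If `f` is bounded and `f · m(Z(·))` is harmonic, then `f` is constant where `m(Z(·))` does not
vanish. This is `bounded_harmonic_const` for real functions, the form in which a functional on
`ℓ¹(V)` annihilating the coboundaries appears. -/
lemma annihilator_const [Countable A] [Countable V] (hm : ExtremalConformal s r F β m) {v₀ : V}
    (hnorm : m (cylV s r v₀) = 1) {f : V → ℝ} {C : ℝ} (hf : ∀ v, |f v| ≤ C)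
    (hharm : ∀ u, HasSum (fun w => (Amat s r F β u w * m (cylV s r w)).toReal * f w)
      ((m (cylV s r u)).toReal * f u)) (v : V) :
    (m (cylV s r v)).toReal * f v = (m (cylV s r v)).toReal * f v₀ := by
  have hC : 0 ≤ C := (abs_nonneg _).trans (hf v₀)
  -- An affine change of `f` with values in `(0, 1]`.
  let k : V → ℝ := fun w => (f w + (C + 1)) / (2 * C + 1)
  have hk0 : ∀ w, 0 < k w := fun w => by
    have := (abs_le.1 (hf w)).1
    exact div_pos (by linarith) (by linarith)
  have hk1 : ∀ w, k w ≤ 1 := fun w => by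
    have := (abs_le.1 (hf w)).2
    exact (div_le_one (by linarith)).2 (by linarith)
  have hkharm : ∀ u, HasSum (fun w => (Amat s r F β u w * m (cylV s r w)).toReal * k w)
      ((m (cylV s r u)).toReal * k u) := by
    intro u
    have := ((hharm u).add ((hasSum_row hm.1 u).mul_right (C + 1))).div_const (2 * C + 1)
    have e : ∀ a w, a * k w = (a * f w + a * (C + 1)) / (2 * C + 1) := fun a w => by
      simp only [k]
      ring
    simp only [e]
    exact this
  have hg := bounded_harmonic_const hm (g := fun w => ENNReal.ofReal (k w))
    (fun w => ENNReal.ofReal_le_one.2 (hk1 w)) (fun w => (ENNReal.ofReal_pos.2 (hk0 w)).ne')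
    (fun u => by
      have h1 : ∀ w, Amat s r F β u w * (ENNReal.ofReal (k w) * m (cylV s r w)) =
          ENNReal.ofReal ((Amat s r F β u w * m (cylV s r w)).toReal * k w) := by
        intro w
        rw [ENNReal.ofReal_mul ENNReal.toReal_nonneg,
          ENNReal.ofReal_toReal (Amat_mul_ne_top hm.1 u w)]
        ring
      simp_rw [h1]
      rw [← ENNReal.ofReal_tsum_of_nonneg
        (fun w => mul_nonneg ENNReal.toReal_nonneg (hk0 w).le) (hkharm u).summable,
        (hkharm u).tsum_eq, ENNReal.ofReal_mul ENNReal.toReal_nonneg,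
        ENNReal.ofReal_toReal (hm.1.2.1 u), mul_comm]) hnorm v
  have hr := congrArg ENNReal.toReal hg
  simp only [ENNReal.toReal_mul, ENNReal.toReal_ofReal (hk0 _).le, k] at hr
  have hpos : (2 * C + 1) ≠ 0 := by linarith
  field_simp at hr
  linarith

open Classical in
/-- The difference `m(Z(v)) (e_v - e_{v₀})` is an `ℓ¹`-limit of finite combinations of
coboundaries, by Hahn-Banach. -/
lemma mem_closure_coboundary [Countable A] [Countable V] (hm : ExtremalConformal s r F β m)
    {v₀ : V} (hnorm : m (cylV s r v₀) = 1) (v : V) :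
    (lp.single 1 v (m (cylV s r v)).toReal - lp.single 1 v₀ (m (cylV s r v)).toReal :
      lp (fun _ : V => ℝ) 1) ∈
      closure (Submodule.span ℝ (Set.range (coboundary hm.1)) : Set (lp (fun _ : V => ℝ) 1)) := by
  by_contra hnot
  set W := Submodule.span ℝ (Set.range (coboundary hm.1)) with hW
  obtain ⟨φ, c, hφ, hφt⟩ := geometric_hahn_banach_closed_point (W.convex.closure)
    isClosed_closure hnot
  have hφW : ∀ x ∈ W, φ x = 0 := by
    intro x hx
    by_contra hne
    have := hφ (((c + 1) / φ x) • x) (subset_closure (W.smul_mem _ hx))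
    rw [map_smul, smul_eq_mul, div_mul_cancel₀ _ hne] at this
    linarith
  have hc : 0 < c := by simpa using hφ 0 (subset_closure W.zero_mem)
  let f : V → ℝ := fun w => φ (lp.single 1 w (1 : ℝ))
  have hφs : ∀ w (a : ℝ), φ (lp.single 1 w a) = a * f w := by
    intro w a
    have : (lp.single 1 w a : lp (fun _ : V => ℝ) 1) = a • lp.single 1 w (1 : ℝ) := by
      rw [← lp.single_smul, smul_eq_mul, mul_one]
    rw [this, map_smul, smul_eq_mul]
  have hf : ∀ w, |f w| ≤ ‖φ‖ := by
    intro w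
    have := φ.le_opNorm (lp.single 1 w (1 : ℝ))
    rwa [lp.norm_single (by norm_num), norm_one, mul_one] at this
  have hharm : ∀ u, HasSum (fun w => (Amat s r F β u w * m (cylV s r w)).toReal * f w)
      ((m (cylV s r u)).toReal * f u) := by
    intro u
    have h0 := hφW _ (Submodule.subset_span ⟨u, rfl⟩)
    rw [coboundary, map_sub, hφs, sub_eq_zero] at h0
    have h1 := (lp.hasSum_single (by norm_num) (rowVec hm.1 u)).mapL φ
    rw [h0]
    simp only [hφs] at h1
    exact h1
  have := annihilator_const hm hnorm hf hharm v
  rw [map_sub, hφs, hφs, this, sub_self] at hφt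
  linarith

end Duality

/-! ### Convergence of the Martin kernel -/

section Convergence

variable {s r : A → V} {F : A → ℝ} {β : ℝ} {m : Measure (PathSpace s r)}

/-- The potential at `w` of the signed measure `u ↦ x(u) / m(Z(u))` on `V`. It is used only for
`m(Z(w)) ≠ 0`, where `G(u,w) = 0` whenever the denominator vanishes and the sum converges. -/
noncomputable def potential (F : A → ℝ) (β : ℝ) (m : Measure (PathSpace s r))
    (x : lp (fun _ : V => ℝ) 1) (w : V) : ℝ :=
  ∑' u, x u * ((Green s r F β u w).toReal / (m (cylV s r u)).toReal)

variable [Countable A] (hm : Conformal s r F β m) {v₀ : V}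
  (hv₀ : ∀ v : V, Green s r F β v₀ v ≠ 0 ∧ Green s r F β v₀ v ≠ ∞)
include hm

lemma Green_eq_zero {u w : V} (hw : m (cylV s r w) ≠ 0) (hu : m (cylV s r u) = 0) :
    Green s r F β u w = 0 := by
  have := Green_mul_le (s := s) (r := r) (F := F) (β := β) (harmonic_cylV hm) u w
  rw [hu, mul_zero, nonpos_iff_eq_zero, mul_eq_zero] at this
  exact this.resolve_right hw

lemma mul_Green_div {u w : V} (hw : m (cylV s r w) ≠ 0) :
    (m (cylV s r u)).toReal * ((Green s r F β u w).toReal / (m (cylV s r u)).toReal) =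
      (Green s r F β u w).toReal := by
  by_cases hu : m (cylV s r u) = 0
  · simp [Green_eq_zero hm hw hu]
  · exact mul_div_cancel₀ _ (ENNReal.toReal_ne_zero.2 ⟨hu, hm.2.1 u⟩)

include hv₀

lemma Green_div_le (u : V) {w : V} (hw : m (cylV s r w) ≠ 0) :
    (Green s r F β u w).toReal / (m (cylV s r u)).toReal ≤
      (Green s r F β w w).toReal / (m (cylV s r w)).toReal := by
  by_cases hu : m (cylV s r u) = 0
  · simp only [hu, ENNReal.toReal_zero, div_zero]
    positivity
  · have h := ENNReal.toReal_mono
      (ENNReal.mul_ne_top (Green_ne_top hv₀ w w) (hm.2.1 u))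
      (Green_mul_le (s := s) (r := r) (F := F) (β := β) (harmonic_cylV hm) u w)
    rw [ENNReal.toReal_mul, ENNReal.toReal_mul] at h
    rwa [div_le_div_iff₀ (ENNReal.toReal_pos hu (hm.2.1 u)) (ENNReal.toReal_pos hw (hm.2.1 w))]

lemma summable_potential (x : lp (fun _ : V => ℝ) 1) {w : V} (hw : m (cylV s r w) ≠ 0) :
    Summable fun u => x u * ((Green s r F β u w).toReal / (m (cylV s r u)).toReal) := by
  have hx : Summable fun u => ‖x u‖ := by
    simpa using (lp.memℓp x).summable (by norm_num)
  refine Summable.of_norm_bounded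
    (hx.mul_right ((Green s r F β w w).toReal / (m (cylV s r w)).toReal)) fun u => ?_
  rw [norm_mul]
  refine mul_le_mul_of_nonneg_left ?_ (norm_nonneg _)
  rw [Real.norm_of_nonneg (by positivity)]
  exact Green_div_le hm hv₀ u hw

lemma potential_add (x y : lp (fun _ : V => ℝ) 1) {w : V} (hw : m (cylV s r w) ≠ 0) :
    potential F β m (x + y) w = potential F β m x w + potential F β m y w := by
  rw [potential, potential, potential,
    ← (summable_potential hm hv₀ x hw).tsum_add (summable_potential hm hv₀ y hw)]
  refine tsum_congr fun u => ?_
  rw [lp.coeFn_add, Pi.add_apply, add_mul]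

omit hm hv₀ [Countable A] in
lemma potential_smul (c : ℝ) (x : lp (fun _ : V => ℝ) 1) (w : V) :
    potential F β m (c • x) w = c * potential F β m x w := by
  rw [potential, potential, ← tsum_mul_left]
  refine tsum_congr fun u => ?_
  rw [lp.coeFn_smul, Pi.smul_apply, smul_eq_mul, mul_assoc]

lemma potential_sub (x y : lp (fun _ : V => ℝ) 1) {w : V} (hw : m (cylV s r w) ≠ 0) :
    potential F β m (x - y) w = potential F β m x w - potential F β m y w := by
  have : x - y = x + (-1 : ℝ) • y := by rw [neg_one_smul, sub_eq_add_neg]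
  rw [this, potential_add hm hv₀ _ _ hw, potential_smul]
  ring

omit hm hv₀ [Countable A] in
open Classical in
lemma potential_single (u : V) (a : ℝ) (w : V) :
    potential F β m (lp.single 1 u a) w =
      a * ((Green s r F β u w).toReal / (m (cylV s r u)).toReal) := by
  rw [potential, tsum_eq_single u]
  · rw [lp.single_apply_self]
  · intro x hx
    rw [lp.single_apply_ne _ _ _ hx, zero_mul]

/-- The potential of the `u`-th coboundary vanishes off `u`, because `(1 - A(β)) G = 1`. -/
lemma potential_coboundary {u w : V} (huw : u ≠ w) (hw : m (cylV s r w) ≠ 0) :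
    potential F β m (coboundary hm u) w = 0 := by
  classical
  have hG := Green_eq (s := s) (r := r) (F := F) (β := β) u w
  rw [if_neg huw, zero_add] at hG
  have hne : ∀ x, Amat s r F β u x * Green s r F β x w ≠ ∞ :=
    ENNReal.ne_top_of_tsum_ne_top (hG ▸ Green_ne_top hv₀ u w)
  have hrow : potential F β m (rowVec hm u) w = (Green s r F β u w).toReal := by
    rw [hG, ENNReal.tsum_toReal_eq hne, potential]
    refine tsum_congr fun x => ?_
    change (Amat s r F β u x * m (cylV s r x)).toReal * _ = _
    rw [ENNReal.toReal_mul, mul_assoc, mul_Green_div hm hw, ENNReal.toReal_mul]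
  rw [coboundary, potential_sub hm hv₀ _ _ hw, hrow]
  have := potential_single (F := F) (β := β) (m := m) u (m (cylV s r u)).toReal w
  rw [mul_Green_div hm hw] at this
  rw [sub_eq_zero, ← this]

lemma potential_span {y : lp (fun _ : V => ℝ) 1}
    (hy : y ∈ Submodule.span ℝ (Set.range (coboundary hm))) :
    ∃ S : Finset V, ∀ w ∉ S, m (cylV s r w) ≠ 0 → potential F β m y w = 0 := by
  classical
  induction hy using Submodule.span_induction with
  | mem x hx =>
    obtain ⟨u, rfl⟩ := hx
    refine ⟨{u}, fun w hw hw0 => potential_coboundary hm hv₀ ?_ hw0⟩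
    rintro rfl
    simp at hw
  | zero => exact ⟨∅, fun w _ _ => by simp [potential]⟩
  | add x y _ _ hx hy =>
    obtain ⟨S, hS⟩ := hx
    obtain ⟨T, hT⟩ := hy
    refine ⟨S ∪ T, fun w hw hw0 => ?_⟩
    rw [Finset.mem_union, not_or] at hw
    rw [potential_add hm hv₀ _ _ hw0, hS w hw.1 hw0, hT w hw.2 hw0, add_zero]
  | smul c x _ hx =>
    obtain ⟨S, hS⟩ := hx
    exact ⟨S, fun w hw hw0 => by rw [potential_smul, hS w hw hw0, mul_zero]⟩

omit hm [Countable A] in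
lemma enorm_potential_le (x : lp (fun _ : V => ℝ) 1) (w : V) :
    ‖potential F β m x w‖ₑ ≤
      ∑' u, ‖x u / (m (cylV s r u)).toReal‖ₑ * Green s r F β u w := by
  refine enorm_tsum_le_tsum_enorm.trans (le_of_eq (tsum_congr fun u => ?_))
  have hG : Green s r F β u w = ‖(Green s r F β u w).toReal‖ₑ := by
    rw [Real.enorm_of_nonneg ENNReal.toReal_nonneg, ENNReal.ofReal_toReal (Green_ne_top hv₀ u w)]
  conv_rhs => rw [hG, ← enorm_mul]
  congr 1
  ring

omit hv₀ [Countable A] in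
lemma tsum_enorm_le (x : lp (fun _ : V => ℝ) 1) :
    ∑' u, ‖x u / (m (cylV s r u)).toReal‖ₑ * m (cylV s r u) ≤ ENNReal.ofReal ‖x‖ := by
  have hx : Summable fun u => ‖x u‖ := by
    simpa using (lp.memℓp x).summable (by norm_num)
  have hnorm : ‖x‖ = ∑' u, ‖x u‖ := by
    rw [lp.norm_eq_tsum_rpow (by norm_num)]
    simp
  rw [hnorm, ENNReal.ofReal_tsum_of_nonneg (fun _ => norm_nonneg _) hx]
  refine ENNReal.tsum_le_tsum fun u => ?_
  have hψ : m (cylV s r u) = ‖(m (cylV s r u)).toReal‖ₑ := by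
    rw [Real.enorm_of_nonneg ENNReal.toReal_nonneg, ENNReal.ofReal_toReal (hm.2.1 u)]
  conv_lhs => rw [hψ, ← enorm_mul]
  rw [ofReal_norm]
  by_cases hu : (m (cylV s r u)).toReal = 0
  · simp [hu]
  · rw [← hψ, div_mul_cancel₀ _ hu]

omit hm in
/-- Almost surely, `G(v,X_k) - m(Z(v)) G(v₀,X_k)` is eventually smaller than `lam * G(v₀,X_k)`. -/
lemma measure_bad_eq_zero [Countable V] (hme : ExtremalConformal s r F β m)
    (hnorm : m (cylV s r v₀) = 1) (v : V) {lam : ℝ≥0∞} (hlam : lam ≠ 0) :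
    m {p | ∃ᶠ k in atTop, s (p.seq k) ∈ {w | lam * Green s r F β v₀ w ≤
      ‖(Green s r F β v w).toReal -
        (m (cylV s r v)).toReal * (Green s r F β v₀ w).toReal‖ₑ}} = 0 := by
  classical
  have hm := hme.1
  refine measure_frequently_eq_zero hm hv₀ _ ?_
  set T : Set V := {w | lam * Green s r F β v₀ w ≤ ‖(Green s r F β v w).toReal -
        (m (cylV s r v)).toReal * (Green s r F β v₀ w).toReal‖ₑ} with hT
  have key : ∀ ε : ℝ, 0 < ε →
      lam * m (cylV s r v₀ ∩ {p | ∃ᶠ k in atTop, s (p.seq k) ∈ T}) ≤ ENNReal.ofReal ε := by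
    intro ε hε
    set t : lp (fun _ : V => ℝ) 1 :=
      lp.single 1 v (m (cylV s r v)).toReal - lp.single 1 v₀ (m (cylV s r v)).toReal with ht
    obtain ⟨y, hy, hty⟩ := Metric.mem_closure_iff.1 (mem_closure_coboundary hme hnorm v) ε hε
    rw [dist_eq_norm] at hty
    obtain ⟨S, hS⟩ := potential_span hm hv₀ hy
    have hpot : ∀ w, m (cylV s r w) ≠ 0 → potential F β m t w = (Green s r F β v w).toReal -
        (m (cylV s r v)).toReal * (Green s r F β v₀ w).toReal := by
      intro w hw
      rw [ht, potential_sub hm hv₀ _ _ hw, potential_single, potential_single,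
        mul_Green_div hm hw, hnorm, ENNReal.toReal_one, div_one]
    let D : Set V := {w | lam * Green s r F β v₀ w ≤
      ∑' u, ‖(t - y) u / (m (cylV s r u)).toReal‖ₑ * Green s r F β u w}
    have hmax := maximal_inequality hm hv₀
      (fun u => ‖(t - y) u / (m (cylV s r u)).toReal‖ₑ) lam D (fun w hw => hw)
    have hsub : m (cylV s r v₀ ∩ {p | ∃ᶠ k in atTop, s (p.seq k) ∈ T}) ≤
        m (cylV s r v₀ ∩ {p | ∃ k, s (p.seq k) ∈ D}) := by
      refine measure_mono_ae ?_
      have h1 := (ae_restrict_iff' (measurableSet_cylV v₀)).1 (ae_wandering hm hv₀)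
      have h2 := (ae_restrict_iff' (measurableSet_cylV v₀)).1 (ae_cylV_ne_zero hm v₀)
      filter_upwards [h1, h2] with p hp1 hp2 hp
      have hpv : p ∈ cylV s r v₀ := hp.1
      have hfreq : ∃ᶠ k in atTop, s (p.seq k) ∈ T := hp.2
      have hfin : ∀ᶠ i in atTop, ∀ w ∈ S, s (p.seq i) ≠ w :=
        (Filter.eventually_all_finset S).2 fun w _ => hp1 hpv w
      obtain ⟨k, hkT, hkS⟩ := (hfreq.and_eventually hfin).exists
      have hw := hp2 hpv k
      refine ⟨hpv, k, ?_⟩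
      have hkT : lam * Green s r F β v₀ (s (p.seq k)) ≤ _ := hkT
      refine hkT.trans ?_
      rw [← hpot _ hw, ← sub_zero (potential F β m t _),
        ← hS _ (fun h => hkS _ h rfl) hw, ← potential_sub hm hv₀ _ _ hw]
      exact enorm_potential_le hv₀ _ _
    calc lam * m (cylV s r v₀ ∩ {p | ∃ᶠ k in atTop, s (p.seq k) ∈ T})
        ≤ lam * m (cylV s r v₀ ∩ {p | ∃ k, s (p.seq k) ∈ D}) := mul_le_mul' le_rfl hsub
      _ ≤ _ := hmax
      _ ≤ ENNReal.ofReal ‖t - y‖ := tsum_enorm_le hm _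
      _ ≤ ENNReal.ofReal ε := ENNReal.ofReal_le_ofReal hty.le
  have h0 : lam * m (cylV s r v₀ ∩ {p | ∃ᶠ k in atTop, s (p.seq k) ∈ T}) = 0 := by
    refine nonpos_iff_eq_zero.1 (ENNReal.le_of_forall_pos_le_add fun ε hε _ => ?_)
    rw [zero_add]
    simpa using key ε hε
  exact (mul_eq_zero.1 h0).resolve_left hlam

end Convergence

/-- for an extremal normalized `e^{βF}`-conformal measure `m`, for `m`-almost
every path `p` and every vertex `v`, `lim_k K_β(v, s(p_k)) = m(Z(v))`. -/
theorem statement5 {V A : Type} [Countable V] [Countable A] (s r : A → V)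
    (F : A → ℝ) (β : ℝ) (v₀ : V)
    (hv₀ : ∀ v : V, Green s r F β v₀ v ≠ 0 ∧ Green s r F β v₀ v ≠ ∞)
    (m : Measure (PathSpace s r)) (hm : ExtremalConformal s r F β m)
    (hnorm : m (cylV s r v₀) = 1) :
    ∀ᵐ p ∂m, ∀ v : V,
      Filter.Tendsto (fun k => MartinK s r F β v₀ v (s (p.seq k))) Filter.atTop
        (𝓝 (m (cylV s r v))) := by
  rw [ae_all_iff]
  intro v
  have hbad : ∀ᵐ p ∂m, ∀ n : ℕ, ∀ᶠ k in atTop, s (p.seq k) ∉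
      {w | ENNReal.ofReal (1 / ((n : ℝ) + 1)) * Green s r F β v₀ w ≤
        ‖(Green s r F β v w).toReal -
          (m (cylV s r v)).toReal * (Green s r F β v₀ w).toReal‖ₑ} := by
    rw [ae_all_iff]
    intro n
    rw [ae_iff]
    simp only [not_eventually, not_not]
    exact measure_bad_eq_zero hv₀ hm hnorm v
      (ENNReal.ofReal_pos.2 Nat.one_div_pos_of_nat).ne'
  filter_upwards [hbad] with p hp
  have hK : ∀ k, MartinK s r F β v₀ v (s (p.seq k)) ≠ ∞ := fun k =>
    ENNReal.div_ne_top (Green_ne_top hv₀ _ _) (hv₀ _).1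
  rw [← ENNReal.tendsto_toReal_iff hK (hm.1.2.1 v), Metric.tendsto_atTop']
  intro ε hε
  obtain ⟨n, hn⟩ := exists_nat_one_div_lt hε
  obtain ⟨N, hN⟩ := eventually_atTop.1 (hp n)
  refine ⟨N, fun k hk => lt_of_le_of_lt ?_ hn⟩
  have h := hN k hk.le
  simp only [not_le] at h
  set w := s (p.seq k)
  have hG : 0 < (Green s r F β v₀ w).toReal := ENNReal.toReal_pos (hv₀ w).1 (hv₀ w).2
  rw [← ENNReal.ofReal_toReal (hv₀ w).2, ← ENNReal.ofReal_mul (by positivity),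
    ← ofReal_norm, ENNReal.toReal_ofReal ENNReal.toReal_nonneg] at h
  have h' := (ENNReal.ofReal_lt_ofReal_iff_of_nonneg (norm_nonneg _)).1 h
  rw [MartinK, ENNReal.toReal_div, Real.dist_eq]
  rw [Real.norm_eq_abs] at h'
  have e : (Green s r F β v w).toReal / (Green s r F β v₀ w).toReal - (m (cylV s r v)).toReal =
      ((Green s r F β v w).toReal - (m (cylV s r v)).toReal * (Green s r F β v₀ w).toReal) /
        (Green s r F β v₀ w).toReal := by
    field_simp
  rw [e, abs_div, abs_of_pos hG, div_le_iff₀ hG]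
  exact h'.le

end GraphKMS
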